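/- Let X be uniformly distributed on the unit simplex in R^n (Dirichlet(1,...,1)). Then E[(max_i X_i)^2] = (H_1(n)^2 + H_2(n)) / (n(n+1)). -/

import Mathlib

open MeasureTheory ProbabilityTheory

/-- The uniform probability distribution on the unit simplex
`Δ^n = {x ∈ [0,∞)^n : x_1 + ... + x_n = 1}`, i.e. normalized `(n-1)`-dimensional
Hausdorff (surface) measure on the simplex; equivalently `Dirichlet(1,...,1)`. -/
noncomputable def simplexUniform (n : ℕ) : Measure (Fin n → ℝ) :=
  (μH[(n : ℝ) - 1] {x : Fin n → ℝ | (∀ i, 0 ≤ x i) ∧ ∑ i, x i = 1})⁻¹ •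
    (μH[(n : ℝ) - 1]).restrict {x : Fin n → ℝ | (∀ i, 0 ≤ x i) ∧ ∑ i, x i = 1}

/-!
Let `T` be a vector of `n` independent standard exponential variables. Its density `exp (-∑ Tᵢ)`
on the orthant depends only on the coordinate sum, so for `G` homogeneous of degree `k`, slicing
the orthant along the sum factors `E[G(T)]` as `Γ(n + k) / Γ(n)` times the mean of `G` on the
simplex; surface measure enters only through its being a constant multiple of Lebesgue measure in
an affine chart of the hyperplane, and the constant cancels in the normalisation.

The maximum of `T` has tail `F n t = 1 - (1 - exp (-t)) ^ n`, and `F (n + 1) - F n` is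
`-1 / (n + 1)` times the derivative of `F (n + 1)`. Integrating this by parts
against powers of `t` expresses the increments in `n` of the moments of the maximum through lower
moments, which produces the harmonic sums.
-/

open Filter Set Topology
open scoped ENNReal
open Module (finrank)

section Hausdorff

variable {E F : Type*} [NormedAddCommGroup E] [NormedSpace ℝ E]
  [NormedAddCommGroup F] [NormedSpace ℝ F] [FiniteDimensional ℝ F] {L : F →ₗ[ℝ] E}

lemma isClosedEmbedding_const_add_linearMap (hL : Function.Injective L) (p : E) :
    IsClosedEmbedding fun y ↦ p + L y :=
  (Homeomorph.addLeft p).isClosedEmbedding.comp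
    (LinearMap.isClosedEmbedding_of_injective (LinearMap.ker_eq_bot.mpr hL))

variable [MeasurableSpace E] [BorelSpace E] [MeasurableSpace F] [BorelSpace F]

theorem isAddHaarMeasure_comap_hausdorffMeasure (hL : Function.Injective L) (p : E) :
    (Measure.comap (fun y ↦ p + L y) (μH[finrank ℝ F] : Measure E)).IsAddHaarMeasure := by
  have comap_apply (s : Set F) :
      Measure.comap (fun y ↦ p + L y) (μH[finrank ℝ F] : Measure E) s
        = μH[finrank ℝ F] (L '' s) := by
    rw [(isClosedEmbedding_const_add_linearMap hL p).measurableEmbedding.comap_apply,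
      ← image_image (p + ·) L]
    exact (IsometryEquiv.addLeft p).hausdorffMeasure_image _ _
  obtain ⟨K, -, hK⟩ := L.injective_iff_antilipschitz.mp hL
  refine { lt_top_of_isCompact := fun s hs ↦ ?_, map_add_left_eq_self := fun v ↦ ?_,
           toIsOpenPosMeasure := Measure.AbsolutelyContinuous.isOpenPosMeasure
            (μ := μH[finrank ℝ F]) fun s hs ↦ ?_ }
  · rw [comap_apply]
    refine ((L.toContinuousLinearMap.lipschitz).hausdorffMeasure_image_le
      (Nat.cast_nonneg _) s).trans_lt (ENNReal.mul_lt_top ?_ hs.measure_lt_top)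
    exact ENNReal.rpow_lt_top_of_nonneg (Nat.cast_nonneg _) ENNReal.coe_ne_top
  · ext s hs
    have image_preimage : L '' ((v + ·) ⁻¹' s) = (L v + ·) ⁻¹' (L '' s) := by
      rw [← image_add_left', ← image_add_left']
      simp only [image_image, ← map_neg, ← map_add]
    rw [Measure.map_apply (measurable_const_add v) hs, comap_apply, comap_apply, image_preimage]
    exact (IsometryEquiv.addLeft (L v)).hausdorffMeasure_preimage _ _
  · rw [comap_apply] at hs
    simpa only [hs, mul_zero, nonpos_iff_eq_zero] using
      hK.le_hausdorffMeasure_image (Nat.cast_nonneg (finrank ℝ F)) s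

theorem exists_setLIntegral_hausdorffMeasure_range_eq (μ : Measure F) [μ.IsAddHaarMeasure]
    (hL : Function.Injective L) (p : E) :
    ∃ c : ℝ≥0∞, c ≠ 0 ∧ c ≠ ∞ ∧ ∀ g : E → ℝ≥0∞,
      ∫⁻ x in range fun y ↦ p + L y, g x ∂μH[finrank ℝ F] = c * ∫⁻ y, g (p + L y) ∂μ := by
  have := isAddHaarMeasure_comap_hausdorffMeasure hL p
  have := FiniteDimensional.proper ℝ F
  set ν := Measure.comap (fun y ↦ p + L y) (μH[finrank ℝ F] : Measure E)
  have hf := (isClosedEmbedding_const_add_linearMap hL p).measurableEmbedding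
  refine ⟨ν.addHaarScalarFactor μ, ?_, ENNReal.coe_ne_top, fun g ↦ ?_⟩
  · exact_mod_cast (Measure.addHaarScalarFactor_pos_of_isAddHaarMeasure ν μ).ne'
  · have hsmul : ν = (ν.addHaarScalarFactor μ : ℝ≥0∞) • μ :=
      Measure.isAddLeftInvariant_eq_smul ν μ
    calc ∫⁻ x in range fun y ↦ p + L y, g x ∂μH[finrank ℝ F]
        = ∫⁻ y, g (p + L y) ∂ν := by rw [← hf.map_comap, hf.lintegral_map]
      _ = _ := by
        conv_lhs => rw [hsmul]
        rw [lintegral_smul_measure, smul_eq_mul]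

end Hausdorff

lemma lintegral_eq_pow_finrank_mul_lintegral_smul {E : Type*} [NormedAddCommGroup E]
    [NormedSpace ℝ E] [FiniteDimensional ℝ E] [MeasurableSpace E] [BorelSpace E]
    (μ : Measure E) [μ.IsAddHaarMeasure] {f : E → ℝ≥0∞} (hf : Measurable f) {r : ℝ} (hr : 0 < r) :
    ∫⁻ x, f x ∂μ = ENNReal.ofReal (r ^ finrank ℝ E) * ∫⁻ x, f (r • x) ∂μ := by
  rw [← lintegral_map hf (measurable_const_smul r), Measure.map_addHaar_smul μ hr.ne',
    lintegral_smul_measure, smul_eq_mul, ← mul_assoc, ← ENNReal.ofReal_mul (by positivity),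
    abs_of_pos (by positivity), mul_inv_cancel₀ (by positivity), ENNReal.ofReal_one, one_mul]

section Slices

/-- The point of `ℝ^(m+1)` with coordinate sum `p.1` and with `p.2` as its last `m` coordinates.
For fixed `p.1` this is an affine chart of the corresponding hyperplane. -/
def sumCons (m : ℕ) : ℝ × (Fin m → ℝ) →ₗ[ℝ] (Fin (m + 1) → ℝ) where
  toFun p := Fin.cons (p.1 - ∑ i, p.2 i) p.2
  map_add' p q := by
    refine funext (Fin.cases ?_ fun i ↦ ?_)
    · simp [Finset.sum_add_distrib, add_sub_add_comm]
    · simp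
  map_smul' r p := by
    refine funext (Fin.cases ?_ fun i ↦ ?_)
    · simp [Finset.mul_sum, mul_sub]
    · simp

variable {m : ℕ}

lemma sumCons_apply (p : ℝ × (Fin m → ℝ)) :
    sumCons m p = Fin.cons (p.1 - ∑ i, p.2 i) p.2 := rfl

lemma sum_sumCons (p : ℝ × (Fin m → ℝ)) : ∑ i, sumCons m p i = p.1 := by
  simp [sumCons_apply, Fin.sum_univ_succ]

lemma sumCons_sum_tail (x : Fin (m + 1) → ℝ) : sumCons m (∑ i, x i, Fin.tail x) = x := by
  simp [sumCons_apply, Fin.sum_univ_succ, Fin.tail]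

lemma sumCons_zero_injective :
    Function.Injective (sumCons m ∘ₗ LinearMap.inr ℝ ℝ (Fin m → ℝ)) :=
  fun _ _ h ↦ funext fun i ↦ congrFun h i.succ

lemma range_sumCons (s : ℝ) : range (fun y ↦ sumCons m (s, y)) = {x | ∑ i, x i = s} := by
  ext x
  constructor
  · rintro ⟨y, rfl⟩
    exact sum_sumCons (s, y)
  · rintro rfl
    exact ⟨Fin.tail x, sumCons_sum_tail x⟩

lemma measurable_sumCons : Measurable (sumCons m) :=
  (sumCons m).continuous_of_finiteDimensional.measurable

lemma measurePreserving_sumCons : MeasurePreserving (sumCons m) := by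
  have shear : MeasurePreserving (fun p : (Fin m → ℝ) × ℝ ↦ (p.1, p.2 - ∑ i, p.1 i))
      (volume.prod volume) (volume.prod volume) :=
    (MeasurePreserving.id volume).skew_product (g := fun (y : Fin m → ℝ) t ↦ t - ∑ i, y i)
      (by fun_prop) (.of_forall fun y ↦ map_sub_right_eq_self volume (∑ i, y i))
  convert! (volume_preserving_piFinSuccAbove (fun _ : Fin (m + 1) ↦ ℝ) 0).symm.comp
    (Measure.measurePreserving_swap.comp (shear.comp Measure.measurePreserving_swap)) using 1
  ext p : 1
  simp [sumCons_apply, MeasurableEquiv.piFinSuccAbove, Fin.insertNthEquiv]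

theorem exists_setLIntegral_sum_eq_one (m : ℕ) :
    ∃ c : ℝ≥0∞, c ≠ 0 ∧ c ≠ ∞ ∧ ∀ g : (Fin (m + 1) → ℝ) → ℝ≥0∞,
      ∫⁻ x in {x | ∑ i, x i = 1}, g x ∂μH[m] = c * ∫⁻ y, g (sumCons m (1, y)) := by
  have hsplit (y : Fin m → ℝ) :
      sumCons m (1, 0) + (sumCons m ∘ₗ LinearMap.inr ℝ ℝ (Fin m → ℝ)) y = sumCons m (1, y) := by
    simp [← map_add]
  simpa only [hsplit, range_sumCons, Module.finrank_fin_fun] using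
    exists_setLIntegral_hausdorffMeasure_range_eq volume sumCons_zero_injective (sumCons m (1, 0))

variable {K : (Fin (m + 1) → ℝ) → ℝ≥0∞} {k : ℝ}

lemma lintegral_sumCons_of_homogeneous (hK : Measurable K)
    (hhom : ∀ s > 0, ∀ x, K (s • x) = ENNReal.ofReal (s ^ k) * K x) {s : ℝ} (hs : 0 < s) :
    ∫⁻ y, K (sumCons m (s, y)) = ENNReal.ofReal (s ^ (m + k)) * ∫⁻ y, K (sumCons m (1, y)) := by
  have hsmul (y : Fin m → ℝ) : sumCons m (s, s • y) = s • sumCons m (1, y) := by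
    simp [← map_smul]
  have hmeas : Measurable fun y ↦ K (sumCons m (s, y)) :=
    hK.comp (measurable_sumCons.comp measurable_prodMk_left)
  rw [lintegral_eq_pow_finrank_mul_lintegral_smul volume hmeas hs]
  simp only [hsmul, hhom s hs]
  rw [lintegral_const_mul' _ _ ENNReal.ofReal_ne_top, Module.finrank_fin_fun, ← mul_assoc,
    ← ENNReal.ofReal_mul (by positivity), ← Real.rpow_natCast, ← Real.rpow_add hs]

theorem setLIntegral_sum_nonneg_mul_of_homogeneous {φ : ℝ → ℝ≥0∞} (hφ : Measurable φ)
    (hK : Measurable K) (hhom : ∀ s > 0, ∀ x, K (s • x) = ENNReal.ofReal (s ^ k) * K x) :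
    ∫⁻ x in {x | 0 ≤ ∑ i, x i}, φ (∑ i, x i) * K x
      = (∫⁻ s in Ioi 0, φ s * ENNReal.ofReal (s ^ (m + k))) * ∫⁻ y, K (sumCons m (1, y)) := by
  have hpre : sumCons m ⁻¹' {x | 0 ≤ ∑ i, x i} = Ici 0 ×ˢ univ := by
    ext p; simp [sum_sumCons]
  have hKs : Measurable fun p ↦ K (sumCons m p) := hK.comp measurable_sumCons
  calc ∫⁻ x in {x | 0 ≤ ∑ i, x i}, φ (∑ i, x i) * K x
      = ∫⁻ p in Ici 0 ×ˢ univ, φ p.1 * K (sumCons m p) := by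
        rw [← measurePreserving_sumCons.setLIntegral_comp_preimage
          (measurableSet_le (by fun_prop) (by fun_prop)) (by fun_prop), hpre]
        simp only [sum_sumCons]
    _ = ∫⁻ s in Ioi 0, φ s * ∫⁻ y, K (sumCons m (s, y)) := by
        rw [Measure.volume_eq_prod, setLIntegral_prod _ (by fun_prop),
          setLIntegral_congr Ioi_ae_eq_Ici.symm]
        simp only [Measure.restrict_univ]
        congr! 2 with s
        exact lintegral_const_mul _ (hKs.comp measurable_prodMk_left)
    _ = _ := by
        rw [← lintegral_mul_const _ (by fun_prop)]
        refine setLIntegral_congr_fun measurableSet_Ioi fun s hs ↦ ?_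
        simp only [lintegral_sumCons_of_homogeneous hK hhom hs, mul_assoc]

end Slices

section Product

theorem lintegral_fin_prod_eq_prod {n : ℕ} {E : Fin n → Type*} [∀ i, MeasurableSpace (E i)]
    (μ : ∀ i, Measure (E i)) [∀ i, SigmaFinite (μ i)] {f : ∀ i, E i → ℝ≥0∞}
    (hf : ∀ i, Measurable (f i)) :
    ∫⁻ x, ∏ i, f i (x i) ∂Measure.pi μ = ∏ i, ∫⁻ t, f i t ∂μ i := by
  induction n with
  | zero => simp
  | succ n ih =>
    rw [← (measurePreserving_piFinSuccAbove μ 0).symm.lintegral_comp (by fun_prop)]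
    simp only [MeasurableEquiv.piFinSuccAbove_symm_apply, Fin.insertNthEquiv_apply,
      Fin.insertNth_zero, Fin.prod_univ_succ, Fin.cons_zero, Fin.cons_succ]
    have htail : Measurable fun y : ∀ i : Fin n, E i.succ ↦ ∏ i, f i.succ (y i) :=
      Finset.measurable_prod _ fun i _ ↦ (hf i.succ).comp (measurable_pi_apply i)
    rw [← ih (fun i ↦ μ i.succ) fun i ↦ hf i.succ]
    exact lintegral_prod_mul (ν := Measure.pi fun i : Fin n ↦ μ i.succ)
      (hf 0).aemeasurable htail.aemeasurable

variable {ι : Type*} [Fintype ι] {E : ι → Type*} [∀ i, MeasurableSpace (E i)]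
  (μ : ∀ i, Measure (E i)) [∀ i, SigmaFinite (μ i)] {f : ∀ i, E i → ℝ≥0∞}

theorem lintegral_fintype_prod_eq_prod (hf : ∀ i, Measurable (f i)) :
    ∫⁻ x, ∏ i, f i (x i) ∂Measure.pi μ = ∏ i, ∫⁻ t, f i t ∂μ i := by
  let e := (Fintype.equivFin ι).symm
  rw [← (measurePreserving_piCongrLeft μ e).lintegral_comp (by fun_prop)]
  simp only [← e.prod_comp, MeasurableEquiv.coe_piCongrLeft, Equiv.piCongrLeft_apply_apply]
  exact lintegral_fin_prod_eq_prod (fun i ↦ μ (e i)) fun i ↦ hf (e i)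

theorem pi_withDensity (hf : ∀ i, Measurable (f i))
    [∀ i, SigmaFinite ((μ i).withDensity (f i))] :
    Measure.pi (fun i ↦ (μ i).withDensity (f i))
      = (Measure.pi μ).withDensity fun x ↦ ∏ i, f i (x i) := by
  refine Measure.pi_eq fun s hs ↦ ?_
  have hbox : MeasurableSet (univ.pi s) := .univ_pi hs
  simp only [withDensity_apply _ hbox, withDensity_apply _ (hs _), Measure.restrict_pi_pi]
  exact lintegral_fintype_prod_eq_prod _ hf

end Product

section Exponential

instance isProbabilityMeasure_expMeasure_one : IsProbabilityMeasure (expMeasure 1) :=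
  isProbabilityMeasure_expMeasure one_pos

variable {ι : Type*} [Fintype ι]

lemma prod_exponentialPDF_one (x : ι → ℝ) :
    ∏ i, exponentialPDF 1 (x i)
      = (Ici 0).indicator (fun x ↦ ENNReal.ofReal (Real.exp (-∑ i, x i))) x := by
  by_cases hx : 0 ≤ x
  · rw [indicator_of_mem (mem_Ici.mpr hx), ← Finset.sum_neg_distrib, Real.exp_sum,
      ENNReal.ofReal_prod_of_nonneg fun i _ ↦ (Real.exp_pos _).le]
    simp only [exponentialPDF_of_nonneg (hx _), one_mul]
  · obtain ⟨i, hi⟩ : ∃ i, x i < 0 := by simpa [Pi.le_def] using hx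
    rw [indicator_of_notMem (by simpa using hx)]
    exact Finset.prod_eq_zero (Finset.mem_univ i) (exponentialPDF_of_neg hi)

lemma lintegral_pi_expMeasure_one {G : (ι → ℝ) → ℝ≥0∞} (hG : Measurable G) :
    ∫⁻ x, G x ∂Measure.pi (fun _ ↦ expMeasure 1)
      = ∫⁻ x in Ici 0, ENNReal.ofReal (Real.exp (-∑ i, x i)) * G x := by
  have hpdf : Measurable (exponentialPDF 1) := (measurable_exponentialPDFReal 1).ennreal_ofReal
  have hexp : expMeasure 1 = volume.withDensity (exponentialPDF 1) := rfl
  have : SigmaFinite (volume.withDensity (exponentialPDF 1)) := by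
    rw [← hexp]; infer_instance
  simp only [hexp]
  rw [pi_withDensity (fun _ ↦ volume) fun _ ↦ hpdf, ← volume_pi,
    lintegral_withDensity_eq_lintegral_mul _ (by fun_prop) hG,
    ← lintegral_indicator measurableSet_Ici]
  simp only [Pi.mul_apply, prod_exponentialPDF_one, indicator_mul_left]

lemma Gamma_div_Gamma_add_two {s : ℝ} (hs : 0 < s) :
    Real.Gamma s / Real.Gamma (s + 2) = 1 / (s * (s + 1)) := by
  have := Real.Gamma_pos_of_pos hs
  rw [← one_add_one_eq_two, ← add_assoc, Real.Gamma_add_one (by positivity),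
    Real.Gamma_add_one hs.ne']
  field_simp

lemma lintegral_exp_neg_mul_rpow {s : ℝ} (hs : 0 < s) :
    ∫⁻ t in Ioi 0, ENNReal.ofReal (Real.exp (-t)) * ENNReal.ofReal (t ^ (s - 1))
      = ENNReal.ofReal (Real.Gamma s) := by
  rw [Real.Gamma_eq_integral hs, ofReal_integral_eq_lintegral_ofReal
    (Real.GammaIntegral_convergent hs)]
  · simp only [ENNReal.ofReal_mul (Real.exp_pos _).le]
  · filter_upwards [self_mem_ae_restrict measurableSet_Ioi] with t (ht : 0 < t)
    positivity

lemma expMeasure_one_Iic {t : ℝ} (ht : 0 ≤ t) :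
    expMeasure 1 (Iic t) = ENNReal.ofReal (1 - Real.exp (-t)) := by
  rw [← ofReal_cdf, cdf_expMeasure_eq one_pos, if_pos ht, one_mul]

lemma ae_nonneg_expMeasure {r : ℝ} : ∀ᵐ t ∂expMeasure r, 0 ≤ t := by
  rw [expMeasure, gammaMeasure, ae_withDensity_iff (f := gammaPDF 1 r)
    (measurable_gammaPDFReal 1 r).ennreal_ofReal]
  exact .of_forall fun t ↦ by contrapose!; exact gammaPDF_of_neg

end Exponential

section MaxExpTail

/-- The tail `P(max_i T_i > t)` of the maximum of `n` independent standard exponential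
variables, for `t ≥ 0`. -/
noncomputable def maxExpTail (n : ℕ) (t : ℝ) : ℝ := 1 - (1 - Real.exp (-t)) ^ n

lemma one_sub_exp_neg_mem_Icc {t : ℝ} (ht : 0 ≤ t) : 1 - Real.exp (-t) ∈ Icc 0 1 :=
  ⟨by simpa using ht, by simpa using (Real.exp_pos (-t)).le⟩

lemma maxExpTail_nonneg (n : ℕ) {t : ℝ} (ht : 0 ≤ t) : 0 ≤ maxExpTail n t :=
  sub_nonneg.mpr (pow_le_one₀ (one_sub_exp_neg_mem_Icc ht).1 (one_sub_exp_neg_mem_Icc ht).2)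

lemma maxExpTail_le (n : ℕ) {t : ℝ} (ht : 0 ≤ t) : maxExpTail n t ≤ n * Real.exp (-t) := by
  have bernoulli := one_add_mul_le_pow (a := -Real.exp (-t))
    (by linarith [(one_sub_exp_neg_mem_Icc ht).1]) n
  rw [← sub_eq_add_neg] at bernoulli
  unfold maxExpTail
  linarith

lemma continuous_maxExpTail (n : ℕ) : Continuous (maxExpTail n) := by
  unfold maxExpTail; fun_prop

lemma hasDerivAt_maxExpTail_succ (n : ℕ) (t : ℝ) :
    HasDerivAt (maxExpTail (n + 1)) (-((n + 1) * (maxExpTail (n + 1) t - maxExpTail n t))) t := by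
  have h := ((((hasDerivAt_neg t).exp).const_sub 1).fun_pow (n + 1)).const_sub 1
  refine HasDerivAt.congr_deriv (f := maxExpTail (n + 1)) h ?_
  simp only [maxExpTail]
  push_cast; ring

lemma pow_mul_maxExpTail_nonneg (j n : ℕ) {t : ℝ} (ht : 0 ≤ t) : 0 ≤ t ^ j * maxExpTail n t :=
  mul_nonneg (pow_nonneg ht j) (maxExpTail_nonneg n ht)

lemma pow_mul_maxExpTail_le (j n : ℕ) {t : ℝ} (ht : 0 ≤ t) :
    t ^ j * maxExpTail n t ≤ n * (t ^ j * Real.exp (-t)) := by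
  rw [mul_left_comm]
  exact mul_le_mul_of_nonneg_left (maxExpTail_le n ht) (pow_nonneg ht j)

lemma integrableOn_pow_mul_maxExpTail (j n : ℕ) :
    IntegrableOn (fun t ↦ t ^ j * maxExpTail n t) (Ioi 0) := by
  have hgamma : IntegrableOn (fun t : ℝ ↦ t ^ j * Real.exp (-t)) (Ioi 0) := by
    simpa [mul_comm] using Real.GammaIntegral_convergent (s := j + 1) (by positivity)
  refine (hgamma.const_mul (n : ℝ)).mono'
    (by have := continuous_maxExpTail n; fun_prop) ?_
  filter_upwards [self_mem_ae_restrict measurableSet_Ioi] with t (ht : 0 < t)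
  rw [Real.norm_of_nonneg (pow_mul_maxExpTail_nonneg j n ht.le)]
  exact pow_mul_maxExpTail_le j n ht.le

lemma tendsto_pow_mul_maxExpTail (j n : ℕ) :
    Tendsto (fun t ↦ t ^ j * maxExpTail n t) atTop (𝓝 0) := by
  have hexp : Tendsto (fun t : ℝ ↦ n * (t ^ j * Real.exp (-t))) atTop (𝓝 0) := by
    simpa using (Real.tendsto_pow_mul_exp_neg_atTop_nhds_zero j).const_mul (n : ℝ)
  refine squeeze_zero' ?_ ?_ hexp <;> filter_upwards [eventually_ge_atTop 0] with t ht
  exacts [pow_mul_maxExpTail_nonneg j n ht, pow_mul_maxExpTail_le j n ht]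

/-- For `j = 0` the boundary term is `0 ^ 0 = 1`, and the truncated exponent `j - 1` is harmless
because its integral is multiplied by `j`. -/
theorem integral_pow_mul_maxExpTail_succ (j n : ℕ) :
    ∫ t in Ioi 0, t ^ j * maxExpTail (n + 1) t
      = (∫ t in Ioi 0, t ^ j * maxExpTail n t)
        + (0 ^ j + j * ∫ t in Ioi 0, t ^ (j - 1) * maxExpTail (n + 1) t) / (n + 1) := by
  have hint (i k : ℕ) := integrableOn_pow_mul_maxExpTail i k
  have hderiv (t : ℝ) : HasDerivAt (fun t ↦ t ^ j * maxExpTail (n + 1) t)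
      (j * (t ^ (j - 1) * maxExpTail (n + 1) t)
        - (n + 1) * (t ^ j * maxExpTail (n + 1) t - t ^ j * maxExpTail n t)) t := by
    refine ((hasDerivAt_pow j t).fun_mul (hasDerivAt_maxExpTail_succ n t)).congr_deriv ?_
    ring
  have ftc := integral_Ioi_of_hasDerivAt_of_tendsto' (a := 0) (fun t _ ↦ hderiv t)
    (((hint (j - 1) (n + 1)).const_mul _).sub (((hint j (n + 1)).fun_sub (hint j n)).const_mul _))
    (tendsto_pow_mul_maxExpTail j (n + 1))
  rw [integral_sub ((hint _ _).const_mul _) (((hint _ _).fun_sub (hint _ _)).const_mul _),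
    integral_const_mul, integral_const_mul, integral_sub (hint _ _) (hint _ _)] at ftc
  have hzero : maxExpTail (n + 1) 0 = 1 := by simp [maxExpTail]
  rw [hzero] at ftc
  field_simp
  linarith

lemma integral_maxExpTail (n : ℕ) :
    ∫ t in Ioi 0, maxExpTail n t = ∑ i ∈ Finset.range n, (1 : ℝ) / (i + 1) := by
  induction n with
  | zero => simp [maxExpTail]
  | succ n ih =>
    rw [Finset.sum_range_succ, ← ih]
    simpa using integral_pow_mul_maxExpTail_succ 0 n

lemma two_mul_integral_mul_maxExpTail (n : ℕ) :
    2 * ∫ t in Ioi 0, t * maxExpTail n t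
      = (∑ i ∈ Finset.range n, (1 : ℝ) / (i + 1)) ^ 2
        + ∑ i ∈ Finset.range n, (1 : ℝ) / (i + 1) ^ 2 := by
  induction n with
  | zero => simp [maxExpTail]
  | succ n ih =>
    have hrec := integral_pow_mul_maxExpTail_succ 1 n
    simp only [pow_one, tsub_self, pow_zero, one_mul, integral_maxExpTail, Nat.cast_one,
      zero_add, Finset.sum_range_succ] at hrec
    rw [hrec, mul_add, ih]
    simp only [Finset.sum_range_succ]
    field_simp
    ring

end MaxExpTail

section Max

lemma measurable_iSup_apply {ι : Type*} [Countable ι] :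
    Measurable fun x : ι → ℝ ↦ ⨆ i, x i :=
  .iSup fun i ↦ measurable_pi_apply i

variable {ι : Type*} [Fintype ι] [Nonempty ι]

lemma pi_lt_iSup (μ : Measure ℝ) [IsProbabilityMeasure μ] (t : ℝ) :
    Measure.pi (fun _ : ι ↦ μ) {x | t < ⨆ i, x i} = 1 - μ (Iic t) ^ Fintype.card ι := by
  have hcompl : {x : ι → ℝ | t < ⨆ i, x i} = (univ.pi fun _ ↦ Iic t)ᶜ := by
    ext x
    simp [lt_ciSup_iff (finite_range x).bddAbove, Pi.le_def]
  rw [hcompl, prob_compl_eq_one_sub (.univ_pi fun _ ↦ measurableSet_Iic), Measure.pi_pi,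
    Finset.prod_const, Finset.card_univ]

lemma pi_expMeasure_one_lt_iSup {t : ℝ} (ht : 0 ≤ t) :
    Measure.pi (fun _ : ι ↦ expMeasure 1) {x | t < ⨆ i, x i}
      = ENNReal.ofReal (maxExpTail (Fintype.card ι) t) := by
  have h0 := (one_sub_exp_neg_mem_Icc ht).1
  rw [pi_lt_iSup, expMeasure_one_Iic ht, ← ENNReal.ofReal_pow h0, maxExpTail,
    ENNReal.ofReal_sub _ (pow_nonneg h0 _), ENNReal.ofReal_one]

theorem lintegral_iSup_pow_expMeasure_one (j : ℕ) :
    ∫⁻ x, ENNReal.ofReal ((⨆ i, x i) ^ (j + 1)) ∂Measure.pi (fun _ : ι ↦ expMeasure 1)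
      = ENNReal.ofReal ((j + 1) * ∫ t in Ioi 0, t ^ j * maxExpTail (Fintype.card ι) t) := by
  have hnonneg : ∀ᵐ x ∂Measure.pi (fun _ : ι ↦ expMeasure 1), 0 ≤ ⨆ i, x i := by
    filter_upwards [eventually_all.mpr fun i : ι ↦
      (Measure.tendsto_eval_ae_ae (i := i)).eventually ae_nonneg_expMeasure] with x hx
    exact Real.iSup_nonneg hx
  have layercake := lintegral_rpow_eq_lintegral_meas_lt_mul _ hnonneg
    measurable_iSup_apply.aemeasurable (p := (j + 1 : ℕ)) (by positivity)
  simp only [Real.rpow_natCast] at layercake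
  simp only [Nat.cast_succ, add_sub_cancel_right, Real.rpow_natCast] at layercake
  rw [layercake, ENNReal.ofReal_mul (by positivity), ofReal_integral_eq_lintegral_ofReal
    (integrableOn_pow_mul_maxExpTail j _)]
  · congr 1
    refine setLIntegral_congr_fun measurableSet_Ioi fun t (ht : 0 < t) ↦ ?_
    simp [pi_expMeasure_one_lt_iSup ht.le, mul_comm (t ^ j),
      ENNReal.ofReal_mul (maxExpTail_nonneg _ ht.le)]
  · filter_upwards [self_mem_ae_restrict measurableSet_Ioi] with t (ht : 0 < t)
    exact pow_mul_maxExpTail_nonneg j _ ht.le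

theorem lintegral_iSup_sq_expMeasure_one :
    ∫⁻ x, ENNReal.ofReal ((⨆ i, x i) ^ 2) ∂Measure.pi (fun _ : ι ↦ expMeasure 1)
      = ENNReal.ofReal ((∑ i ∈ Finset.range (Fintype.card ι), (1 : ℝ) / (i + 1)) ^ 2
          + ∑ i ∈ Finset.range (Fintype.card ι), (1 : ℝ) / (i + 1) ^ 2) := by
  simpa [one_add_one_eq_two, two_mul_integral_mul_maxExpTail] using
    lintegral_iSup_pow_expMeasure_one (ι := ι) 1

end Max

section Simplex

variable {m : ℕ}

lemma indicator_Ici_zero_smul {ι : Type*} {G : (ι → ℝ) → ℝ≥0∞} {k : ℝ}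
    (hhom : ∀ s > 0, ∀ x, G (s • x) = ENNReal.ofReal (s ^ k) * G x) {s : ℝ} (hs : 0 < s)
    (x : ι → ℝ) :
    (Ici 0).indicator G (s • x) = ENNReal.ofReal (s ^ k) * (Ici 0).indicator G x := by
  have hmem : s • x ∈ Ici 0 ↔ x ∈ Ici 0 := by simp [Pi.le_def, mul_nonneg_iff_of_pos_left hs]
  by_cases hx : x ∈ Ici 0
  · rw [indicator_of_mem hx, indicator_of_mem (hmem.mpr hx), hhom s hs]
  · rw [indicator_of_notMem hx, indicator_of_notMem (mt hmem.mp hx), mul_zero]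

theorem lintegral_pi_expMeasure_one_of_homogeneous {G : (Fin (m + 1) → ℝ) → ℝ≥0∞}
    (hG : Measurable G) {k : ℝ} (hk : 0 < m + 1 + k)
    (hhom : ∀ s > 0, ∀ x, G (s • x) = ENNReal.ofReal (s ^ k) * G x) :
    ∫⁻ x, G x ∂Measure.pi (fun _ ↦ expMeasure 1)
      = ENNReal.ofReal (Real.Gamma (m + 1 + k))
        * ∫⁻ y, (Ici 0).indicator G (sumCons m (1, y)) := by
  have hsub : Ici (0 : Fin (m + 1) → ℝ) ⊆ {x | 0 ≤ ∑ i, x i} :=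
    fun x hx ↦ Finset.sum_nonneg fun i _ ↦ hx i
  have hrestrict (f : (Fin (m + 1) → ℝ) → ℝ≥0∞) :
      ∫⁻ x in Ici 0, f x = ∫⁻ x in {x | 0 ≤ ∑ i, x i}, (Ici 0).indicator f x := by
    rw [setLIntegral_indicator measurableSet_Ici, inter_eq_left.mpr hsub]
  calc ∫⁻ x, G x ∂Measure.pi (fun _ ↦ expMeasure 1)
      = ∫⁻ x in {x | 0 ≤ ∑ i, x i},
          ENNReal.ofReal (Real.exp (-∑ i, x i)) * (Ici 0).indicator G x := by
        rw [lintegral_pi_expMeasure_one hG, hrestrict]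
        simp only [indicator_mul_right]
    _ = (∫⁻ s in Ioi 0, ENNReal.ofReal (Real.exp (-s)) * ENNReal.ofReal (s ^ (m + k)))
          * ∫⁻ y, (Ici 0).indicator G (sumCons m (1, y)) :=
        setLIntegral_sum_nonneg_mul_of_homogeneous
          (φ := fun s ↦ ENNReal.ofReal (Real.exp (-s))) (by fun_prop)
          (hG.indicator measurableSet_Ici) fun s hs ↦ indicator_Ici_zero_smul hhom hs
    _ = _ := by
        rw [← lintegral_exp_neg_mul_rpow hk, add_right_comm, add_sub_cancel_right]

theorem lintegral_simplexUniform_succ (g : (Fin (m + 1) → ℝ) → ℝ≥0∞) :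
    ∫⁻ x, g x ∂simplexUniform (m + 1)
      = ENNReal.ofReal (Real.Gamma (m + 1))
        * ∫⁻ y, (Ici 0).indicator g (sumCons m (1, y)) := by
  obtain ⟨c, hc0, hc_top, hc⟩ := exists_setLIntegral_sum_eq_one m
  have hsurface (f : (Fin (m + 1) → ℝ) → ℝ≥0∞) :
      ∫⁻ x in {x | (∀ i, 0 ≤ x i) ∧ ∑ i, x i = 1}, f x ∂μH[m]
        = c * ∫⁻ y, (Ici 0).indicator f (sumCons m (1, y)) := by
    rw [← hc, setLIntegral_indicator measurableSet_Ici]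
    rfl
  set V := ∫⁻ y, (Ici 0).indicator 1 (sumCons m (1, y))
  have hV : ENNReal.ofReal (Real.Gamma (m + 1)) * V = 1 := by
    simpa using (lintegral_pi_expMeasure_one_of_homogeneous (m := m) (G := 1) (k := 0)
      measurable_const (by positivity) (by simp)).symm
  have harea : μH[m] {x : Fin (m + 1) → ℝ | (∀ i, 0 ≤ x i) ∧ ∑ i, x i = 1} = c * V := by
    simpa using hsurface 1
  have hdim : ((m + 1 : ℕ) : ℝ) - 1 = m := by simp
  rw [simplexUniform, hdim, lintegral_smul_measure, hsurface, harea, smul_eq_mul,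
    ENNReal.mul_inv (.inl hc0) (.inl hc_top), ENNReal.eq_inv_of_mul_eq_one_left hV,
    mul_mul_mul_comm, ENNReal.inv_mul_cancel hc0 hc_top, one_mul]

theorem lintegral_simplexUniform_of_homogeneous {n : ℕ} (hn : 0 < n) {G : (Fin n → ℝ) → ℝ≥0∞}
    (hG : Measurable G) {k : ℝ} (hk : 0 < n + k)
    (hhom : ∀ s > 0, ∀ x, G (s • x) = ENNReal.ofReal (s ^ k) * G x) :
    ∫⁻ x, G x ∂simplexUniform n
      = ENNReal.ofReal (Real.Gamma n / Real.Gamma (n + k))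
        * ∫⁻ x, G x ∂Measure.pi (fun _ ↦ expMeasure 1) := by
  obtain ⟨m, rfl⟩ := Nat.exists_eq_succ_of_ne_zero hn.ne'
  rw [Nat.cast_succ] at hk ⊢
  rw [lintegral_simplexUniform_succ, lintegral_pi_expMeasure_one_of_homogeneous hG hk hhom,
    ← mul_assoc, ← ENNReal.ofReal_mul (by positivity),
    div_mul_cancel₀ _ (Real.Gamma_pos_of_pos hk).ne']

end Simplex

/-- If `X` is uniform on the unit simplex in `ℝ^n`, then
`E[(max_i X_i)²] = (H_1(n)² + H_2(n))/(n(n+1))`. -/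
theorem stmt_6 (n : ℕ) (hn : 0 < n) :
    ∫ x, (⨆ i, x i) ^ 2 ∂(simplexUniform n)
      = ((∑ i ∈ Finset.range n, (1 : ℝ) / (i + 1)) ^ 2
          + ∑ i ∈ Finset.range n, (1 : ℝ) / (i + 1) ^ 2) / ((n : ℝ) * (n + 1)) := by
  have : Nonempty (Fin n) := ⟨⟨0, hn⟩⟩
  have homogeneous : ∀ s > 0, ∀ x : Fin n → ℝ, ENNReal.ofReal ((⨆ i, (s • x) i) ^ 2)
      = ENNReal.ofReal (s ^ (2 : ℝ)) * ENNReal.ofReal ((⨆ i, x i) ^ 2) := fun s hs x ↦ by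
    simp only [Pi.smul_apply, smul_eq_mul]
    rw [← Real.mul_iSup_of_nonneg hs.le, mul_pow, ENNReal.ofReal_mul (sq_nonneg s), Real.rpow_two]
  have hmax : Measurable fun x : Fin n → ℝ ↦ (⨆ i, x i) ^ 2 := measurable_iSup_apply.pow_const 2
  rw [integral_eq_lintegral_of_nonneg_ae (.of_forall fun _ ↦ sq_nonneg _) hmax.aestronglyMeasurable,
    lintegral_simplexUniform_of_homogeneous hn hmax.ennreal_ofReal (by positivity) homogeneous,
    lintegral_iSup_sq_expMeasure_one, Fintype.card_fin, Gamma_div_Gamma_add_two (by positivity),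
    ← ENNReal.ofReal_mul (by positivity), ENNReal.toReal_ofReal (by positivity), one_div_mul_eq_div]
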